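/- Under hypotheses (H0)–(H3), if ψ: E→ℝ is Lipschitz with ⟨ψ,μ*⟩=0, then E_{μ*} Z_1² < ∞, i.e. σ² := E_{μ*}[(χ(X_1) − χ(X_0) + ψ(X_1))²] is finite when the chain is started from the invariant measure μ*. -/

import Mathlib

open MeasureTheory ProbabilityTheory Filter Bornology
open scoped ENNReal NNReal Topology

variable {E : Type*} [MeasurableSpace E] [MetricSpace E] [CompleteSpace E]
  [SecondCountableTopology E] [BorelSpace E]

/-- The Markov operator acting on functions: `Pf(x) = ∫ f(y) π(x, dy)`. -/
noncomputable def Pfun (π : Kernel E E) (f : E → ℝ) : E → ℝ := fun x => ∫ y, f y ∂(π x)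

/-- The Markov operator acting on measures (the transfer operator `ν ↦ νP`). -/
noncomputable def Pmeas (π : Kernel E E) (ν : MeasureTheory.Measure E) :
    MeasureTheory.Measure E := ν.bind (fun x => π x)

/-- `ν ∈ M_{1,1}`: a Borel probability measure with finite first moment. -/
def FiniteFirstMoment (ν : MeasureTheory.Measure E) : Prop :=
  IsProbabilityMeasure ν ∧ ∃ x₀ : E, Integrable (fun x => dist x₀ x) ν

/-- The Wasserstein (dual-Lipschitz) distance between two measures. -/
noncomputable def wassDist (ν₁ ν₂ : MeasureTheory.Measure E) : ℝ :=
  sSup {r : ℝ | ∃ f : E → ℝ, LipschitzWith 1 f ∧ r = |∫ x, f x ∂ν₁ - ∫ x, f x ∂ν₂|}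

/-- The natural filtration of the coordinate process on `ℕ → E`. -/
def natFilt : Filtration ℕ (MeasurableSpace.pi : MeasurableSpace (ℕ → E)) :=
  Filtration.natural (fun k (ω : ℕ → E) => ω k)
    (fun k => (measurable_pi_apply k).stronglyMeasurable)

/-- `ℙ` is the law of the Markov chain on `E^ℕ` with transition probability `π` and
initial distribution `ν`. -/
structure IsMarkovChainLaw (π : Kernel E E) (ν : MeasureTheory.Measure E)
    (P : MeasureTheory.Measure (ℕ → E)) : Prop where
  prob : IsProbabilityMeasure P
  init : P.map (fun ω => ω 0) = ν
  markov : ∀ (n : ℕ) (g : E → ℝ), Measurable g → IsBounded (Set.range g) →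
    P[(fun ω => g (ω (n + 1))) | natFilt n] =ᵐ[P] fun ω => ∫ y, g y ∂(π (ω n))

/-- The corrector function `χ = ∑_{i≥0} Pⁱψ`. -/
noncomputable def chiFun (π : Kernel E E) (ψ : E → ℝ) : E → ℝ :=
  fun x => ∑' i : ℕ, (Pfun π)^[i] ψ x

/-- The martingale `S_n = χ(X_n) - χ(X_0) + ∑_{i=0}^n ψ(X_i)` as a function of the trajectory. -/
noncomputable def SFun (π : Kernel E E) (ψ : E → ℝ) (n : ℕ) : (ℕ → E) → ℝ :=
  fun ω => chiFun π ψ (ω n) - chiFun π ψ (ω 0) + ∑ i ∈ Finset.range (n + 1), ψ (ω i)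

/-- The martingale differences `Z_n = χ(X_n) - χ(X_{n-1}) + ψ(X_n)`. -/
noncomputable def ZFun (π : Kernel E E) (ψ : E → ℝ) (n : ℕ) : (ℕ → E) → ℝ :=
  fun ω => chiFun π ψ (ω n) - chiFun π ψ (ω (n - 1)) + ψ (ω n)

/-!
By the spectral gap `Pⁿψ` is Lipschitz with a constant of order `γⁿ` and tends to `⟨ψ, μ*⟩ = 0`
geometrically fast, so the series `χ` converges to a Lipschitz function. The gap also yields
`μPⁿ → μ*` in the Wasserstein distance, hence weakly, and `L^p` norms of continuous functions are
lower semicontinuous under weak convergence; the moment bound (H3) therefore passes to `μ*`.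
Consequently `ψ` and `χ` lie in `L^p(μ*)`, and `μ*` is the law of every `X_n` of the stationary
chain.
-/

section Lipschitz

variable {X : Type*} [PseudoMetricSpace X]

lemma lipschitzWith_tsum {G : Type*} [NormedAddCommGroup G] {ι : Type*}
    {f : ι → X → G} {K : ι → ℝ≥0} (hf : ∀ i, LipschitzWith (K i) (f i)) (hK : Summable K)
    (hsum : ∀ x, Summable fun i => f i x) :
    LipschitzWith (∑' i, K i) fun x => ∑' i, f i x := by
  refine LipschitzWith.of_dist_le_mul fun x y => ?_
  rw [dist_eq_norm, ← (hsum x).tsum_sub (hsum y)]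
  refine tsum_of_norm_bounded ((NNReal.hasSum_coe.2 hK.hasSum).mul_right (dist x y)) fun i => ?_
  simpa only [dist_eq_norm] using (hf i).dist_le_mul x y

lemma memLp_of_lipschitzWith {G : Type*} [NormedAddCommGroup G] [MeasurableSpace X]
    [OpensMeasurableSpace X] [SecondCountableTopologyEither X G] {ν : Measure X}
    [IsFiniteMeasure ν] {p : ℝ≥0∞} {x₀ : X} (hν : MemLp (fun x => dist x₀ x) p ν) {f : X → G}
    {L : ℝ≥0} (hf : LipschitzWith L f) : MemLp f p ν := by
  have hdiff : MemLp (fun x => f x - f x₀) p ν := by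
    refine hν.of_le_mul (c := L)
      (hf.continuous.sub continuous_const).aestronglyMeasurable (.of_forall fun x => ?_)
    simpa [dist_eq_norm, dist_comm] using hf.dist_le_mul x x₀
  simpa only [Pi.add_def, sub_add_cancel] using hdiff.add (memLp_const (f x₀))

end Lipschitz

lemma iSup_eLpNorm_lt_top_of_integral_rpow_le {Ω ι : Type*} [MeasurableSpace Ω] {P : Measure Ω}
    {Y : ι → Ω → ℝ} (hY : ∀ i, 0 ≤ Y i) {r M : ℝ} (hr : 0 < r)
    (hint : ∀ i, Integrable (fun ω => Y i ω ^ r) P) (hM : ∀ i, ∫ ω, Y i ω ^ r ∂P ≤ M) :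
    (⨆ i, eLpNorm (Y i) (ENNReal.ofReal r) P) < ∞ := by
  suffices h : ∀ i, eLpNorm (Y i) (ENNReal.ofReal r) P ≤ ENNReal.ofReal M ^ (1 / r) from
    (iSup_le h).trans_lt (by finiteness)
  intro i
  rw [eLpNorm_eq_lintegral_rpow_enorm_toReal (by simpa) ENNReal.ofReal_ne_top,
    ENNReal.toReal_ofReal hr.le]
  gcongr
  calc ∫⁻ ω, ‖Y i ω‖ₑ ^ r ∂P = ∫⁻ ω, ENNReal.ofReal (Y i ω ^ r) ∂P :=
        lintegral_congr fun ω => by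
          rw [Real.enorm_of_nonneg (hY i ω), ENNReal.ofReal_rpow_of_nonneg (hY i ω) hr.le]
    _ = ENNReal.ofReal (∫ ω, Y i ω ^ r ∂P) := (ofReal_integral_eq_lintegral_ofReal (hint i)
        (.of_forall fun ω => Real.rpow_nonneg (hY i ω) r)).symm
    _ ≤ ENNReal.ofReal M := ENNReal.ofReal_le_ofReal (hM i)

section WeakConvergence

variable {X G : Type*} [TopologicalSpace X] [MeasurableSpace X] [OpensMeasurableSpace X]
  [HasOuterApproxClosed X] [SeminormedAddCommGroup G] {νs : ℕ → ProbabilityMeasure X}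
  {ν : ProbabilityMeasure X} {f : X → G}

lemma lintegral_enorm_rpow_le_liminf_of_tendsto (hνs : Tendsto νs atTop (𝓝 ν)) (hf : Continuous f)
    {r : ℝ} (hr : 0 ≤ r) :
    ∫⁻ x, ‖f x‖ₑ ^ r ∂ν ≤ liminf (fun n => ∫⁻ x, ‖f x‖ₑ ^ r ∂(νs n : Measure X)) atTop := by
  have h := lintegral_le_liminf_lintegral_of_forall_isOpen_measure_le_liminf_measure
    (hf.norm.rpow_const fun _ => .inr hr) (fun x => Real.rpow_nonneg (norm_nonneg (f x)) r)
    fun _ hG => ProbabilityMeasure.le_liminf_measure_open_of_tendsto hνs hG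
  simpa only [← ENNReal.ofReal_rpow_of_nonneg (norm_nonneg _) hr, ofReal_norm] using h

lemma eLpNorm_top_le_liminf_of_tendsto (hνs : Tendsto νs atTop (𝓝 ν)) (hf : Continuous f) :
    eLpNorm f ∞ ν ≤ liminf (fun n => eLpNorm f ∞ (νs n : Measure X)) atTop := by
  refine le_of_forall_gt_imp_ge_of_dense fun b hb => essSup_le_of_ae_le b ?_
  have hnull : ∃ᶠ n in atTop, (νs n : Measure X) {x | b < ‖f x‖ₑ} ≤ 0 := by
    refine (frequently_lt_of_liminf_lt (by isBoundedDefault) hb).mono fun n hn => ?_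
    refine (measure_eq_zero_iff_ae_notMem.2 ?_).le
    filter_upwards [ae_le_eLpNormEssSup (f := f)] with x hx
    exact (hx.trans hn.le).not_gt
  have hopen : IsOpen {x | b < ‖f x‖ₑ} := isOpen_lt continuous_const hf.enorm
  have hzero : (ν : Measure X) {x | b < ‖f x‖ₑ} ≤ 0 :=
    (ProbabilityMeasure.le_liminf_measure_open_of_tendsto hνs hopen).trans
      (liminf_le_of_frequently_le hnull)
  filter_upwards [measure_eq_zero_iff_ae_notMem.1 (le_zero_iff.1 hzero)] with x hx
  exact not_lt.1 hx

lemma eLpNorm_le_liminf_of_tendsto (hνs : Tendsto νs atTop (𝓝 ν)) (hf : Continuous f) (p : ℝ≥0∞) :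
    eLpNorm f p ν ≤ liminf (fun n => eLpNorm f p (νs n : Measure X)) atTop := by
  rcases eq_or_ne p 0 with rfl | hp₀
  · simp
  rcases eq_or_ne p ∞ with rfl | hp
  · exact eLpNorm_top_le_liminf_of_tendsto hνs hf
  simp only [eLpNorm_eq_lintegral_rpow_enorm_toReal hp₀ hp]
  have hp' : 0 < 1 / p.toReal := one_div_pos.2 (ENNReal.toReal_pos hp₀ hp)
  calc (∫⁻ x, ‖f x‖ₑ ^ p.toReal ∂ν) ^ (1 / p.toReal)
      ≤ (liminf (fun n => ∫⁻ x, ‖f x‖ₑ ^ p.toReal ∂(νs n : Measure X)) atTop) ^ (1 / p.toReal) :=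
        ENNReal.rpow_le_rpow
          (lintegral_enorm_rpow_le_liminf_of_tendsto hνs hf ENNReal.toReal_nonneg) hp'.le
    _ = liminf (fun n => (∫⁻ x, ‖f x‖ₑ ^ p.toReal ∂(νs n : Measure X)) ^ (1 / p.toReal)) atTop :=
        (ENNReal.orderIsoRpow _ hp').liminf_apply

end WeakConvergence

section Wasserstein

variable {X : Type*} [MetricSpace X] [MeasurableSpace X]

lemma wassDist_nonneg (ν₁ ν₂ : Measure X) : 0 ≤ wassDist ν₁ ν₂ :=
  Real.sSup_nonneg <| by rintro _ ⟨f, -, rfl⟩; exact abs_nonneg _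

variable [OpensMeasurableSpace X] {ν ν₁ ν₂ : Measure X} {f : X → ℝ} {L : ℝ≥0}

lemma FiniteFirstMoment.integrable_of_lipschitzWith (hν : FiniteFirstMoment ν)
    (hf : LipschitzWith L f) : Integrable f ν := by
  obtain ⟨_, x₀, hx₀⟩ := hν
  exact memLp_one_iff_integrable.1 (memLp_of_lipschitzWith (memLp_one_iff_integrable.2 hx₀) hf)

lemma FiniteFirstMoment.dirac (x : X) : FiniteFirstMoment (Measure.dirac x) :=
  ⟨inferInstance, x, integrable_dirac (by simp)⟩

lemma FiniteFirstMoment.abs_integral_sub_apply_le (hν : FiniteFirstMoment ν)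
    (hf : LipschitzWith L f) (x₀ : X) : |∫ x, f x ∂ν - f x₀| ≤ L * ∫ x, dist x x₀ ∂ν := by
  have := hν.1
  have hdist := hν.integrable_of_lipschitzWith (LipschitzWith.dist_left x₀)
  calc |∫ x, f x ∂ν - f x₀| = ‖∫ x, (f x - f x₀) ∂ν‖ := by
        rw [integral_sub (hν.integrable_of_lipschitzWith hf) (integrable_const _)]; simp
    _ ≤ ∫ x, L * dist x x₀ ∂ν :=
        norm_integral_le_of_norm_le (hdist.const_mul _) (.of_forall (hf.dist_le_mul · x₀))
    _ = L * ∫ x, dist x x₀ ∂ν := integral_const_mul _ _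

lemma bddAbove_abs_integral_sub_lipschitz (h₁ : FiniteFirstMoment ν₁) (h₂ : FiniteFirstMoment ν₂) :
    BddAbove {r : ℝ | ∃ f : X → ℝ, LipschitzWith 1 f ∧ r = |∫ x, f x ∂ν₁ - ∫ x, f x ∂ν₂|} := by
  obtain ⟨x₀, -⟩ := h₁.2
  refine ⟨∫ x, dist x x₀ ∂ν₁ + ∫ x, dist x x₀ ∂ν₂, ?_⟩
  rintro _ ⟨f, hf, rfl⟩
  calc |∫ x, f x ∂ν₁ - ∫ x, f x ∂ν₂|
      ≤ |∫ x, f x ∂ν₁ - f x₀| + |f x₀ - ∫ x, f x ∂ν₂| := abs_sub_le _ _ _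
    _ ≤ ∫ x, dist x x₀ ∂ν₁ + ∫ x, dist x x₀ ∂ν₂ := by
        rw [abs_sub_comm (f x₀)]
        simpa using add_le_add (h₁.abs_integral_sub_apply_le hf x₀)
          (h₂.abs_integral_sub_apply_le hf x₀)

lemma abs_integral_sub_le_mul_wassDist (h₁ : FiniteFirstMoment ν₁) (h₂ : FiniteFirstMoment ν₂)
    (hf : LipschitzWith L f) : |∫ x, f x ∂ν₁ - ∫ x, f x ∂ν₂| ≤ L * wassDist ν₁ ν₂ := by
  rcases eq_or_ne L 0 with rfl | hL
  · have := h₁.1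
    have := h₂.1
    obtain ⟨x₀, -⟩ := h₁.2
    have hconst : f = fun _ => f x₀ := funext fun x => (LipschitzWith.zero_iff f).1 hf x x₀
    rw [hconst]
    simp
  have hL' : (0 : ℝ) < L := by exact_mod_cast hL.bot_lt
  have hunit : LipschitzWith 1 fun x => (L : ℝ)⁻¹ * f x := by
    simpa [hL] using! (lipschitzWith_smul (L : ℝ)⁻¹).comp hf
  have hle : |∫ x, (L : ℝ)⁻¹ * f x ∂ν₁ - ∫ x, (L : ℝ)⁻¹ * f x ∂ν₂| ≤ wassDist ν₁ ν₂ :=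
    le_csSup (bddAbove_abs_integral_sub_lipschitz h₁ h₂) ⟨_, hunit, rfl⟩
  rwa [integral_const_mul, integral_const_mul, ← mul_sub, abs_mul, abs_of_pos (inv_pos.2 hL'),
    inv_mul_le_iff₀ hL'] at hle

lemma wassDist_dirac_le (x y : X) : wassDist (Measure.dirac x) (Measure.dirac y) ≤ dist x y := by
  refine Real.sSup_le ?_ dist_nonneg
  rintro _ ⟨f, hf, rfl⟩
  simpa [Real.dist_eq] using hf.dist_le_mul x y

lemma tendsto_of_tendsto_wassDist {ι : Type*} {l : Filter ι} [l.IsCountablyGenerated]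
    {νs : ι → ProbabilityMeasure X} {ν : ProbabilityMeasure X}
    (hνs : ∀ n, FiniteFirstMoment (νs n : Measure X)) (hν : FiniteFirstMoment (ν : Measure X))
    (hlim : Tendsto (fun n => wassDist (νs n : Measure X) ν) l (𝓝 0)) :
    Tendsto νs l (𝓝 ν) := by
  refine tendsto_iff_forall_lipschitz_integral_tendsto.2 fun f _ ⟨L, hf⟩ => ?_
  refine tendsto_iff_dist_tendsto_zero.2 <| squeeze_zero (fun _ => dist_nonneg)
    (fun n => abs_integral_sub_le_mul_wassDist (hνs n) hν hf) ?_
  simpa using hlim.const_mul (L : ℝ)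

end Wasserstein

section MarkovOperator

variable {X : Type*} [MeasurableSpace X] {π : Kernel X X}

lemma Pmeas_dirac (π : Kernel X X) (x : X) : Pmeas π (Measure.dirac x) = π x :=
  Measure.dirac_bind π.measurable x

lemma Pfun_eq_integral_Pmeas_dirac (π : Kernel X X) (f : X → ℝ) (x : X) :
    Pfun π f x = ∫ y, f y ∂(Pmeas π (Measure.dirac x)) := by
  rw [Pmeas_dirac, Pfun]

lemma integral_Pmeas {ν : Measure X} {f : X → ℝ} (hf : Integrable f (Pmeas π ν)) :
    ∫ x, f x ∂(Pmeas π ν) = ∫ x, Pfun π f x ∂ν :=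
  Kernel.integral_comp (κ := Kernel.const Unit ν) (η := π) (a := ()) hf

variable [MetricSpace X]

/-- Hypotheses (H1) and (H2): the Markov operator of `π` preserves `M_{1,1}` and its `n`-th power,
`n ≥ 1`, multiplies the Wasserstein distance by at most `c γⁿ`, where `γ < 1`. The
constants lie in `ℝ≥0` so that they can serve directly as Lipschitz constants. -/
structure HasWassersteinGap (π : Kernel X X) (γ c : ℝ≥0) : Prop where
  rate_lt_one : γ < 1
  finiteFirstMoment : ∀ ν, FiniteFirstMoment ν → FiniteFirstMoment (Pmeas π ν)
  wassDist_le : ∀ n, 1 ≤ n → ∀ ν₁ ν₂, FiniteFirstMoment ν₁ → FiniteFirstMoment ν₂ →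
    wassDist ((Pmeas π)^[n] ν₁) ((Pmeas π)^[n] ν₂) ≤ c * γ ^ n * wassDist ν₁ ν₂

namespace HasWassersteinGap

variable {γ c : ℝ≥0} {ν ν₁ ν₂ μstar : Measure X} {f ψ : X → ℝ} {L : ℝ≥0}

lemma finiteFirstMoment_iterate (hπ : HasWassersteinGap π γ c) (hν : FiniteFirstMoment ν) (n : ℕ) :
    FiniteFirstMoment ((Pmeas π)^[n] ν) :=
  Function.Iterate.rec FiniteFirstMoment hν hπ.finiteFirstMoment n

lemma wassDist_iterate_le (hπ : HasWassersteinGap π γ c) (h₁ : FiniteFirstMoment ν₁)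
    (h₂ : FiniteFirstMoment ν₂) (n : ℕ) :
    wassDist ((Pmeas π)^[n] ν₁) ((Pmeas π)^[n] ν₂) ≤ max 1 c * γ ^ n * wassDist ν₁ ν₂ := by
  have hnonneg := wassDist_nonneg ν₁ ν₂
  rcases n.eq_zero_or_pos with rfl | hn
  · simpa using le_mul_of_one_le_left hnonneg (le_max_left 1 (c : ℝ))
  · refine (hπ.wassDist_le n hn ν₁ ν₂ h₁ h₂).trans ?_
    gcongr
    exact le_max_right _ _

lemma tendsto_wassDist_iterate (hπ : HasWassersteinGap π γ c) (h₁ : FiniteFirstMoment ν₁)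
    (h₂ : FiniteFirstMoment ν₂) :
    Tendsto (fun n => wassDist ((Pmeas π)^[n] ν₁) ((Pmeas π)^[n] ν₂)) atTop (𝓝 0) := by
  refine squeeze_zero (fun n => wassDist_nonneg _ _) (hπ.wassDist_iterate_le h₁ h₂) ?_
  have hγ : Tendsto (fun n => (γ : ℝ) ^ n) atTop (𝓝 0) :=
    tendsto_pow_atTop_nhds_zero_of_lt_one γ.2 hπ.rate_lt_one
  simpa using (hγ.const_mul (max 1 (c : ℝ))).mul_const (wassDist ν₁ ν₂)

variable [OpensMeasurableSpace X]

lemma eLpNorm_le_of_forall_iterate (hπ : HasWassersteinGap π γ c) (hν : FiniteFirstMoment ν)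
    (hμstar : FiniteFirstMoment μstar) (hinv : Pmeas π μstar = μstar)
    {G : Type*} [SeminormedAddCommGroup G] {g : X → G} (hg : Continuous g) {p C : ℝ≥0∞}
    (hbound : ∀ n, eLpNorm g p ((Pmeas π)^[n] ν) ≤ C) : eLpNorm g p μstar ≤ C := by
  have hiter := hπ.finiteFirstMoment_iterate hν
  have hlim := hπ.tendsto_wassDist_iterate hν hμstar
  simp only [Function.iterate_fixed hinv] at hlim
  have hweak := tendsto_of_tendsto_wassDist (νs := fun n => ⟨(Pmeas π)^[n] ν, (hiter n).1⟩)
    (ν := ⟨μstar, hμstar.1⟩) hiter hμstar hlim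
  exact (eLpNorm_le_liminf_of_tendsto hweak hg p).trans
    (liminf_le_of_frequently_le (Frequently.of_forall hbound))

lemma abs_integral_iterate_sub_le (hπ : HasWassersteinGap π γ c) (h₁ : FiniteFirstMoment ν₁)
    (h₂ : FiniteFirstMoment ν₂) (hf : LipschitzWith L f) (n : ℕ) :
    |∫ x, f x ∂((Pmeas π)^[n] ν₁) - ∫ x, f x ∂((Pmeas π)^[n] ν₂)| ≤
      L * (max 1 c * γ ^ n * wassDist ν₁ ν₂) :=
  (abs_integral_sub_le_mul_wassDist (hπ.finiteFirstMoment_iterate h₁ n)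
    (hπ.finiteFirstMoment_iterate h₂ n) hf).trans
    (mul_le_mul_of_nonneg_left (hπ.wassDist_iterate_le h₁ h₂ n) L.2)

lemma lipschitzWith_integral_iterate_dirac (hπ : HasWassersteinGap π γ c)
    (hf : LipschitzWith L f) (n : ℕ) :
    LipschitzWith (L * max 1 c * γ ^ n)
      fun x => ∫ y, f y ∂((Pmeas π)^[n] (Measure.dirac x)) := by
  refine LipschitzWith.of_dist_le_mul fun x y => ?_
  calc |_| ≤ L * (max 1 c * γ ^ n * wassDist (Measure.dirac x) (Measure.dirac y)) :=
        hπ.abs_integral_iterate_sub_le (.dirac x) (.dirac y) hf n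
    _ ≤ L * (max 1 c * γ ^ n * dist x y) := by gcongr; exact wassDist_dirac_le x y
    _ = ↑(L * max 1 c * γ ^ n) * dist x y := by push_cast; ring

lemma lipschitzWith_Pfun (hπ : HasWassersteinGap π γ c) (hf : LipschitzWith L f) :
    LipschitzWith (L * max 1 c * γ) (Pfun π f) := by
  simpa [← Pfun_eq_integral_Pmeas_dirac] using hπ.lipschitzWith_integral_iterate_dirac hf 1

lemma integral_iterate_Pmeas (hπ : HasWassersteinGap π γ c) (hν : FiniteFirstMoment ν)
    (hf : LipschitzWith L f) (n : ℕ) :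
    ∫ x, f x ∂((Pmeas π)^[n] ν) = ∫ x, (Pfun π)^[n] f x ∂ν := by
  induction n generalizing f L with
  | zero => rfl
  | succ n ih =>
    have hn := hπ.finiteFirstMoment_iterate hν n
    have hint := (hπ.finiteFirstMoment _ hn).integrable_of_lipschitzWith hf
    rw [Function.iterate_succ_apply', Function.iterate_succ_apply, integral_Pmeas hint,
      ih (hπ.lipschitzWith_Pfun hf)]

lemma iterate_Pfun_apply (hπ : HasWassersteinGap π γ c) (hf : LipschitzWith L f) (n : ℕ) (x : X) :
    (Pfun π)^[n] f x = ∫ y, f y ∂((Pmeas π)^[n] (Measure.dirac x)) := by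
  rw [hπ.integral_iterate_Pmeas (.dirac x) hf, integral_dirac]

lemma lipschitzWith_iterate_Pfun (hπ : HasWassersteinGap π γ c) (hf : LipschitzWith L f) (n : ℕ) :
    LipschitzWith (L * max 1 c * γ ^ n) ((Pfun π)^[n] f) :=
  funext (hπ.iterate_Pfun_apply hf n) ▸ hπ.lipschitzWith_integral_iterate_dirac hf n

lemma summable_iterate_Pfun (hπ : HasWassersteinGap π γ c) (hμstar : FiniteFirstMoment μstar)
    (hinv : Pmeas π μstar = μstar) (hψ : LipschitzWith L ψ) (hψ0 : ∫ x, ψ x ∂μstar = 0) (x : X) :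
    Summable fun n => (Pfun π)^[n] ψ x := by
  have hgeom : Summable fun n : ℕ => (γ : ℝ) ^ n := summable_geometric_of_lt_one γ.2 hπ.rate_lt_one
  refine .of_norm_bounded
    (((hgeom.mul_left (max 1 (c : ℝ))).mul_right (wassDist (.dirac x) μstar)).mul_left (L : ℝ))
    fun n => ?_
  have hn := hπ.abs_integral_iterate_sub_le (.dirac x) hμstar hψ n
  rwa [Function.iterate_fixed hinv, hψ0, sub_zero, ← hπ.iterate_Pfun_apply hψ] at hn

lemma lipschitzWith_chiFun (hπ : HasWassersteinGap π γ c) (hμstar : FiniteFirstMoment μstar)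
    (hinv : Pmeas π μstar = μstar) (hψ : LipschitzWith L ψ) (hψ0 : ∫ x, ψ x ∂μstar = 0) :
    LipschitzWith (L * max 1 c * (1 - γ)⁻¹) (chiFun π ψ) := by
  rw [← NNReal.tsum_geometric hπ.rate_lt_one, ← NNReal.tsum_mul_left]
  exact lipschitzWith_tsum (hπ.lipschitzWith_iterate_Pfun hψ)
    ((NNReal.summable_geometric hπ.rate_lt_one).mul_left _)
    (hπ.summable_iterate_Pfun hμstar hinv hψ hψ0)

end HasWassersteinGap

end MarkovOperator

section MarkovChain

variable {X : Type*} [MeasurableSpace X] [MetricSpace X] [SecondCountableTopology X]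
  [BorelSpace X] {π : Kernel X X} [IsMarkovKernel π] {ν μ μstar : Measure X}
  {P : Measure (ℕ → X)}

namespace IsMarkovChainLaw

lemma map_eval_succ (hP : IsMarkovChainLaw π ν P) (n : ℕ) :
    P.map (fun ω => ω (n + 1)) = Pmeas π (P.map fun ω => ω n) := by
  have := hP.prob
  have hX (k : ℕ) : Measurable fun ω : ℕ → X => ω k := measurable_pi_apply k
  have := Measure.isProbabilityMeasure_map (μ := P) (hX n).aemeasurable
  have : IsProbabilityMeasure (Pmeas π (P.map fun ω => ω n)) :=
    inferInstanceAs (IsProbabilityMeasure ((P.map fun ω => ω n).bind π))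
  refine ext_of_forall_integral_eq_of_IsFiniteMeasure fun g => ?_
  have hg := g.continuous.measurable
  calc ∫ x, g x ∂(P.map fun ω => ω (n + 1))
      = ∫ ω, g (ω (n + 1)) ∂P :=
        integral_map (hX (n + 1)).aemeasurable hg.aestronglyMeasurable
    _ = ∫ ω, (P[fun ω => g (ω (n + 1)) | natFilt n]) ω ∂P := (integral_condExp (natFilt.le n)).symm
    _ = ∫ ω, Pfun π g (ω n) ∂P := integral_congr_ae (hP.markov n g hg g.isBounded_range)
    _ = ∫ x, Pfun π g x ∂(P.map fun ω => ω n) :=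
        (integral_map (hX n).aemeasurable
          hg.stronglyMeasurable.integral_kernel.aestronglyMeasurable).symm
    _ = ∫ x, g x ∂(Pmeas π (P.map fun ω => ω n)) := (integral_Pmeas (g.integrable _)).symm

lemma map_eval (hP : IsMarkovChainLaw π ν P) (n : ℕ) :
    P.map (fun ω => ω n) = (Pmeas π)^[n] ν := by
  induction n with
  | zero => exact hP.init
  | succ n ih => rw [hP.map_eval_succ, ih, Function.iterate_succ_apply']

lemma eLpNorm_eval {G : Type*} [TopologicalSpace G] [ContinuousENorm G]
    (hP : IsMarkovChainLaw π ν P) {g : X → G} (hg : StronglyMeasurable g) (p : ℝ≥0∞) (n : ℕ) :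
    eLpNorm (fun ω => g (ω n)) p P = eLpNorm g p ((Pmeas π)^[n] ν) := by
  rw [← hP.map_eval n, eLpNorm_map_measure hg.aestronglyMeasurable
    (measurable_pi_apply n).aemeasurable, Function.comp_def]

lemma measurePreserving_eval (hP : IsMarkovChainLaw π μstar P) (hinv : Pmeas π μstar = μstar)
    (n : ℕ) : MeasurePreserving (fun ω => ω n) P μstar :=
  ⟨measurable_pi_apply n, by rw [hP.map_eval, Function.iterate_fixed hinv]⟩

end IsMarkovChainLaw

lemma memLp_ZFun (hP : IsMarkovChainLaw π μstar P) (hinv : Pmeas π μstar = μstar) {ψ : X → ℝ}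
    {p : ℝ≥0∞} (hψ : MemLp ψ p μstar) (hχ : MemLp (chiFun π ψ) p μstar) (n : ℕ) :
    MemLp (ZFun π ψ n) p P :=
  ((hχ.comp_measurePreserving (hP.measurePreserving_eval hinv n)).sub
    (hχ.comp_measurePreserving (hP.measurePreserving_eval hinv (n - 1)))).add
    (hψ.comp_measurePreserving (hP.measurePreserving_eval hinv n))

theorem variance_finite_for_stationary_chain_general {γ c : ℝ≥0}
    (hπ : HasWassersteinGap π γ c) (hμ : FiniteFirstMoment μ)
    {Pμ : Measure (ℕ → X)} (hPμ : IsMarkovChainLaw π μ Pμ) {p : ℝ≥0∞} {x₀ : X}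
    (hmoment : (⨆ n, eLpNorm (fun ω : ℕ → X => dist x₀ (ω n)) p Pμ) < ∞)
    (hμstar : FiniteFirstMoment μstar) (hinv : Pmeas π μstar = μstar)
    {ψ : X → ℝ} {L : ℝ≥0} (hψ : LipschitzWith L ψ) (hψ0 : ∫ x, ψ x ∂μstar = 0)
    {Pstar : Measure (ℕ → X)} (hPstar : IsMarkovChainLaw π μstar Pstar) (n : ℕ) :
    MemLp (ZFun π ψ n) p Pstar := by
  have := hμstar.1
  have hcont : Continuous fun x => dist x₀ x := continuous_const.dist continuous_id
  have hbound (k : ℕ) : eLpNorm (fun x => dist x₀ x) p ((Pmeas π)^[k] μ) ≤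
      ⨆ n, eLpNorm (fun ω : ℕ → X => dist x₀ (ω n)) p Pμ :=
    (hPμ.eLpNorm_eval hcont.stronglyMeasurable p k).ge.trans
      (le_iSup (fun n => eLpNorm (fun ω : ℕ → X => dist x₀ (ω n)) p Pμ) k)
  have hdist : MemLp (fun x => dist x₀ x) p μstar :=
    ⟨hcont.aestronglyMeasurable,
      (hπ.eLpNorm_le_of_forall_iterate hμ hμstar hinv hcont hbound).trans_lt hmoment⟩
  exact memLp_ZFun hPstar hinv (memLp_of_lipschitzWith hdist hψ)
    (memLp_of_lipschitzWith hdist (hπ.lipschitzWith_chiFun hμstar hinv hψ hψ0)) n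

end MarkovChain

/-- `E_{μ*} Z₁² < ∞`: the variance `σ²` is finite for the stationary chain. -/
theorem variance_finite_for_stationary_chain
    {E : Type*} [MeasurableSpace E] [MetricSpace E] [CompleteSpace E]
    [SecondCountableTopology E] [BorelSpace E]
    (π : Kernel E E) [IsMarkovKernel π] (γ c : ℝ) (hγ : γ ∈ Set.Ioo (0 : ℝ) 1) (hc : 0 < c)
    -- (H0): the Feller property
    (hH0 : ∀ f : E → ℝ, Continuous f → IsBounded (Set.range f) → Continuous (Pfun π f))
    -- (H1): `P` preserves `M_{1,1}`
    (hH1 : ∀ ν : MeasureTheory.Measure E, FiniteFirstMoment ν → FiniteFirstMoment (Pmeas π ν))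
    -- (H2): spectral gap in the Wasserstein metric
    (hH2 : ∀ n : ℕ, 1 ≤ n → ∀ ν₁ ν₂ : MeasureTheory.Measure E, FiniteFirstMoment ν₁ →
      FiniteFirstMoment ν₂ →
      wassDist ((Pmeas π)^[n] ν₁) ((Pmeas π)^[n] ν₂) ≤ c * γ ^ n * wassDist ν₁ ν₂)
    -- the chain: initial distribution `μ ∈ M_{1,1}` and its law `Pμ` on `E^ℕ`
    (μ : MeasureTheory.Measure E) (hμ : FiniteFirstMoment μ)
    (Pμ : MeasureTheory.Measure (ℕ → E)) (hPμ : IsMarkovChainLaw π μ Pμ)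
    -- (H3): uniformly bounded moments of order `2 + δ`
    (x₀ : E) (δ : ℝ) (hδ : 0 < δ)
    (hH3int : ∀ n : ℕ, Integrable (fun ω : ℕ → E => dist x₀ (ω n) ^ (2 + δ)) Pμ)
    (hH3 : ∃ M : ℝ, ∀ n : ℕ, ∫ ω : ℕ → E, dist x₀ (ω n) ^ (2 + δ) ∂Pμ ≤ M)
    -- the unique invariant measure `μ* ∈ M_{1,1}`
    (μstar : MeasureTheory.Measure E) (hμstar : FiniteFirstMoment μstar)
    (hinv : Pmeas π μstar = μstar)
    (huniq : ∀ ν : MeasureTheory.Measure E, IsProbabilityMeasure ν → Pmeas π ν = ν → ν = μstar)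
    -- `ψ` is Lipschitz with `⟨ψ, μ*⟩ = 0`
    (ψ : E → ℝ) (Lψ : ℝ≥0) (hψ : LipschitzWith Lψ ψ) (hψ0 : ∫ x, ψ x ∂μstar = 0)
    -- the law of the stationary chain, used to define `σ² = E_{μ*} Z₁²`
    (Pstar : MeasureTheory.Measure (ℕ → E)) (hPstar : IsMarkovChainLaw π μstar Pstar) :
    Integrable (fun ω => (ZFun π ψ 1 ω) ^ 2) Pstar := by
  obtain ⟨M, hM⟩ := hH3
  have hπ : HasWassersteinGap π ⟨γ, hγ.1.le⟩ ⟨c, hc.le⟩ := ⟨hγ.2, hH1, hH2⟩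
  have hmoment : (⨆ n, eLpNorm (fun ω : ℕ → E => dist x₀ (ω n)) (ENNReal.ofReal (2 + δ)) Pμ) < ∞ :=
    iSup_eLpNorm_lt_top_of_integral_rpow_le (fun _ _ => dist_nonneg) (by positivity) hH3int hM
  have hp : 2 ≤ ENNReal.ofReal (2 + δ) := by
    simpa using ENNReal.ofReal_le_ofReal (le_add_of_nonneg_right hδ.le : (2 : ℝ) ≤ 2 + δ)
  have := hPstar.prob
  exact ((variance_finite_for_stationary_chain_general hπ hμ hPμ hmoment hμstar hinv hψ hψ0
    hPstar 1).mono_exponent hp).integrable_sq
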